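/- Let A be a nonzero complex number, set δ = -A² - A⁻², let W₁, …, Wₙ be the standard basis column vectors of ℂⁿ, and for k = 1, …, n-1 define v_k = iA·W_k - iA⁻¹·W_{k+1}, U_k = v_k v_kᵗ (plain transpose), and ρ(σ_k) = A·Iₙ + A⁻¹·U_k. Then: (1) each ρ(σ_k) is invertible with inverse A⁻¹·Iₙ + A·U_k; (2) ρ(σ_k)ρ(σ_{k+1})ρ(σ_k) = ρ(σ_{k+1})ρ(σ_k)ρ(σ_{k+1}) for k = 1, …, n-2; (3) ρ(σ_k)ρ(σ_l) = ρ(σ_l)ρ(σ_k) whenever |k - l| > 1. Hence the ρ(σ_k) satisfy the defining relations of the Artin braid group Bₙ. -/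

import Mathlib

open Matrix

/-!
The matrices `U_k` satisfy the Temperley–Lieb relations `U_k² = δ U_k`, `U_k U_{k±1} U_k = U_k` and
`U_k U_l = U_l U_k` for `|k - l| > 1`. As `U_k` has rank one, these only record the dot products
`v_k ⬝ v_k = δ`, `v_k ⬝ v_{k+1} = 1` and `v_k ⬝ v_l = 0`. In every algebra, Kauffman's substitution
`σ_k ↦ A + A⁻¹ U_k` turns the Temperley–Lieb relations into the braid relations: for `l = k ± 1`,
the coefficient `2A + A⁻¹ δ + A⁻³` of `U_k` in the image of `σ_k σ_l σ_k` equals the coefficient `A`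
of `U_l` because `δ = -A² - A⁻²`, so the product is symmetric in `k` and `l`.
-/

section KauffmanResolution

variable {R M : Type*} [CommRing R] [Ring M] [Algebra R M] {A : Rˣ} {u w : M}

/-- The value `δ = -A² - A⁻²` of a closed loop in the Kauffman bracket, the parameter of the
Temperley–Lieb algebra. -/
def loopValue (A : Rˣ) : R :=
  -(A : R) ^ 2 - (↑A⁻¹ : R) ^ 2

/-- Kauffman's resolution `A + A⁻¹ u` of a crossing, where `u` stands for a Temperley–Lieb
generator. The variable `A` is a unit, so that the opposite crossing is the resolution at `A⁻¹`. -/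
def kauffmanResolution (A : Rˣ) (u : M) : M :=
  (A : R) • (1 : M) + (↑A⁻¹ : R) • u

theorem loopValue_inv (A : Rˣ) : loopValue A⁻¹ = loopValue A := by
  simp only [loopValue, inv_inv]
  ring

theorem kauffmanResolution_mul_inv (hu : u * u = loopValue A • u) :
    kauffmanResolution A u * kauffmanResolution A⁻¹ u = 1 := by
  have hA : (A : R) * (↑A⁻¹ : R) = 1 := A.mul_inv
  simp only [kauffmanResolution, inv_inv, mul_add, add_mul, smul_mul_smul_comm, one_mul, mul_one,
    hu, loopValue]
  match_scalars
  · linear_combination hA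
  · linear_combination (-(A : R) ^ 2 - (↑A⁻¹ : R) ^ 2) * hA

theorem kauffmanResolution_inv_mul (hu : u * u = loopValue A • u) :
    kauffmanResolution A⁻¹ u * kauffmanResolution A u = 1 := by
  have hu' : u * u = loopValue A⁻¹ • u := by rw [loopValue_inv, hu]
  simpa only [inv_inv] using kauffmanResolution_mul_inv hu'

theorem kauffmanResolution_mul_mul (hu : u * u = loopValue A • u) (huw : u * w * u = u) :
    kauffmanResolution A u * kauffmanResolution A w * kauffmanResolution A u =
      (A : R) ^ 3 • (1 : M) + (A : R) • (u + w) + (↑A⁻¹ : R) • (u * w + w * u) := by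
  have hA : (A : R) * (↑A⁻¹ : R) = 1 := A.mul_inv
  simp only [kauffmanResolution, mul_add, add_mul, smul_mul_assoc, mul_smul_comm, one_mul, mul_one,
    hu, huw, loopValue]
  match_scalars
  · ring
  · linear_combination ((A : R) - (A : R) ^ 2 * (↑A⁻¹ : R) - (↑A⁻¹ : R) ^ 3) * hA
  · linear_combination (A : R) * hA
  · linear_combination (↑A⁻¹ : R) * hA
  · linear_combination (↑A⁻¹ : R) * hA

theorem kauffmanResolution_braid (hu : u * u = loopValue A • u) (hw : w * w = loopValue A • w)
    (huw : u * w * u = u) (hwu : w * u * w = w) :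
    kauffmanResolution A u * kauffmanResolution A w * kauffmanResolution A u =
      kauffmanResolution A w * kauffmanResolution A u * kauffmanResolution A w := by
  rw [kauffmanResolution_mul_mul hu huw, kauffmanResolution_mul_mul hw hwu, add_comm w u,
    add_comm (w * u)]

theorem commute_kauffmanResolution (h : Commute u w) :
    Commute (kauffmanResolution A u) (kauffmanResolution A w) := by
  have hw : Commute u (kauffmanResolution A w) :=
    ((Commute.one_right u).smul_right _).add_right (h.smul_right _)
  exact ((Commute.one_left _).smul_left _).add_left (hw.smul_left _)

end KauffmanResolution

section RankOne

variable {R m : Type*} [CommRing R] [Fintype m] {v w : m → R}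

theorem vecMulVec_self_mul_self (v : m → R) :
    vecMulVec v v * vecMulVec v v = (v ⬝ᵥ v) • vecMulVec v v := by
  rw [vecMulVec_mul_vecMulVec, vecMulVec_smul]

theorem vecMulVec_self_mul_mul_of_dotProduct_eq_one (h : v ⬝ᵥ w = 1) :
    vecMulVec v v * vecMulVec w w * vecMulVec v v = vecMulVec v v := by
  rw [vecMulVec_mul_vecMulVec, h, one_smul, vecMulVec_mul_vecMulVec, dotProduct_comm, h, one_smul]

theorem commute_vecMulVec_self_of_dotProduct_eq_zero (h : v ⬝ᵥ w = 0) :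
    Commute (vecMulVec v v) (vecMulVec w w) := by
  rw [Commute, SemiconjBy, vecMulVec_mul_vecMulVec, vecMulVec_mul_vecMulVec, dotProduct_comm w, h,
    zero_smul, zero_smul, vecMulVec_zero, vecMulVec_zero]

end RankOne

section BurauVector

variable {R m : Type*} [CommRing R] [DecidableEq m] {I : R} {A : Rˣ} {i j k l : m}

/-- The vector `I A W_i - I A⁻¹ W_j` attached to a pair of basis vectors, with `I` playing the role
of the imaginary unit; the vector `v_k` of the Burau representation is the case `i = k`,
`j = k + 1`. -/
def burauVector (I : R) (A : Rˣ) (i j : m) : m → R :=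
  Pi.single i (I * A) - Pi.single j (I * (↑A⁻¹ : R))

variable [Fintype m]

theorem burauVector_dotProduct (w : m → R) :
    burauVector I A i j ⬝ᵥ w = I * A * w i - I * (↑A⁻¹ : R) * w j := by
  rw [burauVector, sub_dotProduct, single_dotProduct, single_dotProduct]

theorem burauVector_dotProduct_self (hI : I ^ 2 = -1) (hij : i ≠ j) :
    burauVector I A i j ⬝ᵥ burauVector I A i j = loopValue A := by
  rw [burauVector_dotProduct]
  simp only [burauVector, Pi.sub_apply, Pi.single_eq_same, Pi.single_eq_of_ne hij,
    Pi.single_eq_of_ne hij.symm, loopValue]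
  linear_combination ((A : R) ^ 2 + (↑A⁻¹ : R) ^ 2) * hI

theorem burauVector_dotProduct_adjacent (hI : I ^ 2 = -1) (hij : i ≠ j) (hik : i ≠ k)
    (hjk : j ≠ k) : burauVector I A i j ⬝ᵥ burauVector I A j k = 1 := by
  rw [burauVector_dotProduct]
  simp only [burauVector, Pi.sub_apply, Pi.single_eq_same, Pi.single_eq_of_ne hij,
    Pi.single_eq_of_ne hik, Pi.single_eq_of_ne hjk]
  linear_combination -(A : R) * (↑A⁻¹ : R) * hI + A.mul_inv

theorem burauVector_dotProduct_disjoint (hik : i ≠ k) (hil : i ≠ l) (hjk : j ≠ k) (hjl : j ≠ l) :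
    burauVector I A i j ⬝ᵥ burauVector I A k l = 0 := by
  rw [burauVector_dotProduct]
  simp only [burauVector, Pi.sub_apply, Pi.single_eq_of_ne hik, Pi.single_eq_of_ne hil,
    Pi.single_eq_of_ne hjk, Pi.single_eq_of_ne hjl, sub_zero, mul_zero]

end BurauVector

theorem burau_type_braid_group_representation_general {R : Type*} [CommRing R] {I : R}
    (hI : I ^ 2 = -1) (A : Rˣ) {n : ℕ} (v : Fin (n - 1) → Fin n → R)
    (hv : ∀ (k : Fin (n - 1)) (j : Fin n), v k j =
      I * A * (if (j : ℕ) = (k : ℕ) then 1 else 0) -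
        I * (↑A⁻¹ : R) * (if (j : ℕ) = (k : ℕ) + 1 then 1 else 0))
    (U : Fin (n - 1) → Matrix (Fin n) (Fin n) R) (hU : ∀ k, U k = vecMulVec (v k) (v k))
    (ρ : Fin (n - 1) → Matrix (Fin n) (Fin n) R)
    (hρ : ∀ k, ρ k = (A : R) • (1 : Matrix (Fin n) (Fin n) R) + (↑A⁻¹ : R) • U k) :
    (∀ k, ρ k * ((↑A⁻¹ : R) • (1 : Matrix (Fin n) (Fin n) R) + (A : R) • U k) = 1 ∧
          ((↑A⁻¹ : R) • (1 : Matrix (Fin n) (Fin n) R) + (A : R) • U k) * ρ k = 1) ∧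
    (∀ k l : Fin (n - 1), (k : ℕ) + 1 = (l : ℕ) → ρ k * ρ l * ρ k = ρ l * ρ k * ρ l) ∧
    (∀ k l : Fin (n - 1), 1 < Nat.dist (k : ℕ) (l : ℕ) → ρ k * ρ l = ρ l * ρ k) := by
  have hv' (k : Fin (n - 1)) : v k = burauVector I A ⟨k, by omega⟩ ⟨k + 1, by omega⟩ := by
    ext j
    simp only [hv, burauVector, Pi.sub_apply, Pi.single_apply, Fin.ext_iff, mul_ite, mul_one,
      mul_zero]
  have hself (k : Fin (n - 1)) : U k * U k = loopValue A • U k := by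
    rw [hU, vecMulVec_self_mul_self, hv', burauVector_dotProduct_self hI (by simp)]
  have hadj (k l : Fin (n - 1)) (hkl : (k : ℕ) + 1 = l) : v k ⬝ᵥ v l = 1 := by
    simp only [hv', ← hkl]
    apply burauVector_dotProduct_adjacent hI <;> rw [Fin.ne_iff_vne] <;> dsimp only <;> omega
  have hfar (k l : Fin (n - 1)) (hkl : 1 < Nat.dist k l) : v k ⬝ᵥ v l = 0 := by
    rw [Nat.dist] at hkl
    rw [hv', hv']
    apply burauVector_dotProduct_disjoint <;> rw [Fin.ne_iff_vne] <;> dsimp only <;> omega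
  obtain rfl : ρ = fun k => kauffmanResolution A (U k) := funext hρ
  refine ⟨fun k => ?_, fun k l hkl => ?_, fun k l hkl => ?_⟩
  · exact ⟨kauffmanResolution_mul_inv (hself k), kauffmanResolution_inv_mul (hself k)⟩
  · have hlk : v l ⬝ᵥ v k = 1 := by rw [dotProduct_comm, hadj k l hkl]
    apply kauffmanResolution_braid (hself k) (hself l) <;> rw [hU, hU]
    · exact vecMulVec_self_mul_mul_of_dotProduct_eq_one (hadj k l hkl)
    · exact vecMulVec_self_mul_mul_of_dotProduct_eq_one hlk
  · apply commute_kauffmanResolution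
    rw [hU, hU]
    exact commute_vecMulVec_self_of_dotProduct_eq_zero (hfar k l hkl)

/-- With `A ≠ 0`, `δ = -A² - A⁻²`, standard basis vectors of `ℂⁿ`,
`v_k = iA·W_k - iA⁻¹·W_{k+1}`, `U_k = v_k v_kᵗ` (plain transpose), and
`ρ(σ_k) = A·Iₙ + A⁻¹·U_k`: (1) each `ρ(σ_k)` is invertible with inverse
`A⁻¹·Iₙ + A·U_k`; (2) `ρ(σ_k)ρ(σ_{k+1})ρ(σ_k) = ρ(σ_{k+1})ρ(σ_k)ρ(σ_{k+1})`;
(3) `ρ(σ_k)ρ(σ_l) = ρ(σ_l)ρ(σ_k)` for `|k - l| > 1`.  Hence the `ρ(σ_k)`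
satisfy the defining relations of the Artin braid group `Bₙ` (this is the
Burau-type representation). -/
theorem burau_type_braid_group_representation (A : ℂ) (hA : A ≠ 0)
    (n : ℕ) (hn : 2 ≤ n)
    (δ : ℂ) (hδ : δ = -A ^ 2 - A⁻¹ ^ 2)
    (v : Fin (n - 1) → Fin n → ℂ)
    (hv : ∀ (k : Fin (n - 1)) (j : Fin n), v k j =
      Complex.I * A * (if (j : ℕ) = (k : ℕ) then 1 else 0) -
        Complex.I * A⁻¹ * (if (j : ℕ) = (k : ℕ) + 1 then 1 else 0))
    (U : Fin (n - 1) → Matrix (Fin n) (Fin n) ℂ)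
    (hU : ∀ k, U k = vecMulVec (v k) (v k))
    (ρ : Fin (n - 1) → Matrix (Fin n) (Fin n) ℂ)
    (hρ : ∀ k, ρ k = A • (1 : Matrix (Fin n) (Fin n) ℂ) + A⁻¹ • U k) :
    (∀ k, ρ k * (A⁻¹ • (1 : Matrix (Fin n) (Fin n) ℂ) + A • U k) = 1 ∧
          (A⁻¹ • (1 : Matrix (Fin n) (Fin n) ℂ) + A • U k) * ρ k = 1) ∧
    (∀ k l : Fin (n - 1), (k : ℕ) + 1 = (l : ℕ) →
      ρ k * ρ l * ρ k = ρ l * ρ k * ρ l) ∧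
    (∀ k l : Fin (n - 1), 1 < Nat.dist (k : ℕ) (l : ℕ) →
      ρ k * ρ l = ρ l * ρ k) :=
  burau_type_braid_group_representation_general Complex.I_sq (Units.mk0 A hA) v hv U hU ρ hρ
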